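/- Let k be an algebraically closed field of characteristic 0 or p > 2, m a positive integer not divisible by the characteristic of k, and ζ ∈ k a primitive m-th root of unity. Let g ∈ SO(2n+1,k) be an element of order exactly m (g^m = I and g^j ≠ I for 0 < j < m). Set 𝔤(1) = {x ∈ so(2n+1,k) : g·x·g⁻¹ = ζ·x} and H = {h ∈ SO(2n+1,k) : h·g = g·h}. Let c be a Cartan subspace of 𝔤(1) and r = dim c. Then, with respect to a suitable basis of c, the little Weyl group of c with respect to H equals G(2m,1,r) if m is odd, and equals G(m,1,r) if m is even. -/

import Mathlib

open Matrix

/-- The group `G(m,q,r)` of `r×r` monomial matrices whose nonzero entries are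
`m`-th roots of unity and the product of whose nonzero entries is an
`(m/q)`-th root of unity, as a set of matrices. -/
def GmqrSet (k : Type*) [Field k] (m q r : ℕ) : Set (Matrix (Fin r) (Fin r) k) :=
  {w | ∃ σ : Equiv.Perm (Fin r),
    (∀ i j, i ≠ σ j → w i j = 0) ∧
    (∀ j, w (σ j) j ^ m = 1) ∧
    (∏ j, w (σ j) j) ^ (m / q) = 1}

/-- A matrix is semisimple if it is diagonalizable. -/
def IsSemisimpleMat {k : Type*} [Field k] {N : Type*} [Fintype N] [DecidableEq N]
    (x : Matrix N N k) : Prop :=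
  ∃ P : Matrix N N k, IsUnit P.det ∧ (P * x * P⁻¹).IsDiag

/-- `c` is a Cartan subspace of `g1`: a subspace of `g1`, consisting of
pairwise commuting diagonalizable matrices, and maximal among such. -/
def IsCartanSubspace {k : Type*} [Field k] {N : Type*} [Fintype N] [DecidableEq N]
    (g1 : Set (Matrix N N k)) (c : Submodule k (Matrix N N k)) : Prop :=
  (c : Set (Matrix N N k)) ⊆ g1 ∧
  (∀ x ∈ c, ∀ y ∈ c, x * y = y * x) ∧
  (∀ x ∈ c, IsSemisimpleMat x) ∧
  ∀ c' : Submodule k (Matrix N N k),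
    ((c' : Set (Matrix N N k)) ⊆ g1 ∧ (∀ x ∈ c', ∀ y ∈ c', x * y = y * x) ∧
      (∀ x ∈ c', IsSemisimpleMat x)) → c ≤ c' → c' = c

/-- The little Weyl group of `c` with respect to `H`, written with respect to
the family `b` (a basis of `c`): the set of matrices of the transformations
`x ↦ h·x·h⁻¹` of `c`, for `h ∈ H` normalizing `c`. -/
def littleWeylSet {k : Type*} [Field k] {N : Type*} [Fintype N] [DecidableEq N] {r : ℕ}
    (H : Set (Matrix N N k)) (c : Submodule k (Matrix N N k))
    (b : Fin r → Matrix N N k) : Set (Matrix (Fin r) (Fin r) k) :=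
  {w | ∃ h ∈ H, (∀ x ∈ c, h * x * h⁻¹ ∈ c) ∧ (∀ x ∈ c, h⁻¹ * x * h ∈ c) ∧
    ∀ j, h * b j * h⁻¹ = ∑ i, w i j • b i}

/-- The `N×N` matrix with `1` on the antidiagonal and `0` elsewhere. -/
def antidiagJ (k : Type*) [Field k] (N : ℕ) : Matrix (Fin N) (Fin N) k :=
  Matrix.of fun i j => if (i : ℕ) + (j : ℕ) = N - 1 then 1 else 0


set_option linter.unusedSectionVars false

section Abstract
open Module

variable {k V : Type*} [Field k] [AddCommGroup V] [Module k V]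

/-- The operator `v ↦ ∑ₚ aₚ B(v, e_{νp}) e_{τp}`. -/
noncomputable def opD {I : Type*} [Fintype I] (B : LinearMap.BilinForm k V) (e : I → V) (ν : I → I)
    (a : I → k) (τ : I → I) : V →ₗ[k] V :=
  ∑ p, a p • (B.flip (e (ν p))).smulRight (e (τ p))

/-- The pairing relation. -/
def Pairing {I : Type*} [DecidableEq I] (B : LinearMap.BilinForm k V) (e : I → V) (ν : I → I) : Prop :=
  ∀ p q, B (e p) (e q) = if q = ν p then 1 else 0

section
variable {I : Type*} [Fintype I] [DecidableEq I] {B : LinearMap.BilinForm k V} {e : I → V} {ν : I → I}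

lemma opD_apply (a : I → k) (τ : I → I) (v : V) :
    opD B e ν a τ v = ∑ p, a p • B v (e (ν p)) • e (τ p) := by
  simp [opD]

lemma opD_e (hν : Function.Involutive ν) (hp : Pairing B e ν) (a : I → k) (τ : I → I) (q : I) :
    opD B e ν a τ (e q) = a q • e (τ q) := by
  rw [opD_apply, Finset.sum_eq_single q]
  · rw [hp]; simp
  · intro p _ hpq
    rw [hp, if_neg]; · simp
    intro h; exact hpq (hν.injective h)
  · simp

lemma opD_u (a : I → k) (τ : I → I) (u : V) (hu : ∀ p, B u (e p) = 0) :
    opD B e ν a τ u = 0 := by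
  rw [opD_apply]; simp [hu]

lemma opD_compl (hν : Function.Involutive ν) (hp : Pairing B e ν) (v : V) (p : I) :
    B (v - opD B e ν 1 id v) (e p) = 0 := by
  rw [map_sub, LinearMap.sub_apply, opD_apply, map_sum, LinearMap.sum_apply,
    Finset.sum_eq_single (ν p)]
  · simp [hp _ _, hν p]
  · intro q _ hq
    have : p ≠ ν q := by rintro rfl; exact hq (hν q).symm
    simp [hp _ _, this]
  · simp

lemma frame_ind (hν : Function.Involutive ν) (hp : Pairing B e ν) {P : V → Prop}
    (hU : ∀ u, (∀ p, B u (e p) = 0) → P u) (he : ∀ p, P (e p))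
    (hadd : ∀ u v, P u → P v → P (u + v)) (hsmul : ∀ (a : k) v, P v → P (a • v)) (v : V) : P v := by
  have h : v = (v - opD B e ν 1 id v) + ∑ p, B v (e (ν p)) • e p := by
    rw [opD_apply]; simp
  rw [h]
  refine hadd _ _ (hU _ (opD_compl hν hp v)) ?_
  have h0 : P 0 := hU 0 (by simp)
  exact Finset.sum_induction _ P hadd h0 (fun p _ => hsmul _ _ (he p))

lemma frame_ext (hν : Function.Involutive ν) (hp : Pairing B e ν) {f g : V →ₗ[k] V}
    (hU : ∀ u, (∀ p, B u (e p) = 0) → f u = g u) (he : ∀ p, f (e p) = g (e p)) : f = g := by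
  ext v
  exact frame_ind hν hp (P := fun v => f v = g v) hU he
    (fun u v h1 h2 => by rw [map_add, map_add, h1, h2])
    (fun a v h => by rw [map_smul, map_smul, h]) v

lemma frame_li (hν : Function.Involutive ν) (hp : Pairing B e ν) : LinearIndependent k e := by
  rw [Fintype.linearIndependent_iff]
  intro a ha q
  have h := congrArg (fun v => B v (e (ν q))) ha
  simp only [map_sum, LinearMap.sum_apply, map_smul, LinearMap.smul_apply, map_zero,
    LinearMap.zero_apply] at h
  rw [Finset.sum_eq_single q] at h
  · simpa [hp _ _] using h
  · intro p _ hpq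
    rw [hp, if_neg]; · simp
    intro h; exact hpq (hν.injective h.symm)
  · simp

/-- `T e_p = e_{τ p}`, and `T` is the identity on the complement. -/
noncomputable def opT (B : LinearMap.BilinForm k V) (e : I → V) (ν : I → I) (τ : I → I) : V →ₗ[k] V :=
  LinearMap.id - opD B e ν 1 id + opD B e ν 1 τ

lemma opT_e (hν : Function.Involutive ν) (hp : Pairing B e ν) (τ : I → I) (q : I) :
    opT B e ν τ (e q) = e (τ q) := by
  simp [opT, opD_e hν hp]

lemma opT_u (τ : I → I) (u : V) (hu : ∀ p, B u (e p) = 0) : opT B e ν τ u = u := by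
  simp [opT, opD_u _ _ u hu]

lemma opT_isom (hsymm : ∀ u v, B u v = B v u) (hν : Function.Involutive ν) (hp : Pairing B e ν)
    (τ : I → I) (hτ : Function.Injective τ) (hτν : ∀ p, τ (ν p) = ν (τ p)) (u v : V) :
    B (opT B e ν τ u) (opT B e ν τ v) = B u v := by
  revert v
  refine frame_ind hν hp
    (P := fun u => ∀ v, B (opT B e ν τ u) (opT B e ν τ v) = B u v) ?_ ?_ ?_ ?_ u
  · intro u hu v
    refine frame_ind hν hp
      (P := fun v => B (opT B e ν τ _) (opT B e ν τ v) = B _ v) ?_ ?_ ?_ ?_ v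
    · intro v hv
      rw [opT_u τ u hu, opT_u τ v hv]
    · intro p
      rw [opT_u τ u hu, opT_e hν hp, hu, hu]
    · intro a b ha hb; simp only [map_add, ha, hb]
    · intro a b hb; simp only [map_smul, hb]
  · intro p v
    refine frame_ind hν hp
      (P := fun v => B (opT B e ν τ _) (opT B e ν τ v) = B _ v) ?_ ?_ ?_ ?_ v
    · intro v hv
      rw [opT_u τ v hv, opT_e hν hp, hsymm, hv, hsymm, hv]
    · intro q
      rw [opT_e hν hp, opT_e hν hp, hp, hp, ← hτν]
      simp [hτ.eq_iff]
    · intro a b ha hb; simp only [map_add, ha, hb]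
    · intro a b hb; simp only [map_smul, hb]
  · intro a b ha hb v; simp only [map_add, LinearMap.add_apply, ha, hb]
  · intro a b hb v; simp only [map_smul, LinearMap.smul_apply, hb]

/-- Skewness of diagonal operators. -/
lemma opD_skew (hsymm : ∀ u v, B u v = B v u) (hν : Function.Involutive ν) (hp : Pairing B e ν)
    (a : I → k) (ha : ∀ p, a (ν p) = - a p) (u v : V) :
    B (opD B e ν a id u) v = - B u (opD B e ν a id v) := by
  revert v
  refine frame_ind hν hp
    (P := fun u => ∀ v, B (opD B e ν a id u) v = - B u (opD B e ν a id v)) ?_ ?_ ?_ ?_ u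
  · intro u hu v
    refine frame_ind hν hp
      (P := fun v => B (opD B e ν a id _) v = - B _ (opD B e ν a id v)) ?_ ?_ ?_ ?_ v
    · intro v hv
      rw [opD_u _ _ u hu, opD_u _ _ v hv]; simp
    · intro p
      rw [opD_u _ _ u hu, opD_e hν hp]; simp [hu]
    · intro a b ha hb; simp only [map_add, ha, hb, neg_add]
    · intro a b hb; simp only [map_smul, hb, smul_neg]
  · intro p v
    refine frame_ind hν hp
      (P := fun v => B (opD B e ν a id _) v = - B _ (opD B e ν a id v)) ?_ ?_ ?_ ?_ v
    · intro v hv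
      rw [opD_u _ _ v hv, opD_e hν hp, hsymm]; simp [hv]
    · intro q
      rw [opD_e hν hp, opD_e hν hp]
      simp only [id, map_smul, LinearMap.smul_apply, hp _ _]
      split_ifs with h
      · subst h; simp [ha]
      · simp
    · intro a b ha hb; simp only [map_add, ha, hb, neg_add]
    · intro a b hb; simp only [map_smul, hb, smul_neg]
  · intro a b ha hb v; simp only [map_add, LinearMap.add_apply, ha, hb, neg_add]
  · intro a b hb v; simp only [map_smul, LinearMap.smul_apply, hb, smul_neg]

end

/-- A frame: common eigenvectors of `C` permuted by `g`. -/
structure WeylFrame {μ ι : Type*} [CommGroup μ] [DecidableEq μ] [DecidableEq ι]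
    (B : LinearMap.BilinForm k V) (g : V →ₗ[k] V) (C : Set (V →ₗ[k] V)) (φ : μ →* k) (n1 y : μ)
    (e : ι × μ → V) : Prop where
  pair : Pairing B e (fun p => (p.1, n1 * p.2))
  ge : ∀ i ω, g (e (i, ω)) = e (i, y * ω)
  eig : ∀ i, ∃ lam : (V →ₗ[k] V) → k, ∀ x ∈ C, ∀ ω, x (e (i, ω)) = (φ ω * lam x) • e (i, ω)

/-- Common eigenvectors. -/
def comEig (C : Set (V →ₗ[k] V)) : Set V :=
  {v | ∃ lam : (V →ₗ[k] V) → k, ∀ x ∈ C, x v = lam x • v}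

section
variable {μ ι : Type*} [CommGroup μ] [Fintype μ] [DecidableEq μ] [DecidableEq ι] [Fintype ι]
    {B : LinearMap.BilinForm k V} {g : V →ₗ[k] V} {C : Set (V →ₗ[k] V)} {φ : μ →* k} {n1 y : μ}
    {e : ι × μ → V}

lemma nu_inv (hn : n1 * n1 = 1) : Function.Involutive (fun p : ι × μ => (p.1, n1 * p.2)) := by
  intro p; simp [← mul_assoc, hn]

lemma g_stab (F : WeylFrame B g C φ n1 y e) (hg : ∀ u v, B (g u) (g v) = B u v)
    (u : V) (hu : ∀ p, B u (e p) = 0) (p : ι × μ) : B (g u) (e p) = 0 := by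
  have := F.ge p.1 (y⁻¹ * p.2)
  rw [mul_inv_cancel_left] at this
  rw [show p = (p.1, p.2) from rfl, ← this, hg, hu]

lemma x_stab (F : WeylFrame B g C φ n1 y e) {x : V →ₗ[k] V} (hx : x ∈ C)
    (hs : ∀ u v, B (x u) v = - B u (x v))
    (u : V) (hu : ∀ p, B u (e p) = 0) (p : ι × μ) : B (x u) (e p) = 0 := by
  obtain ⟨lam, hl⟩ := F.eig p.1
  rw [hs, show p = (p.1, p.2) from rfl, hl x hx, map_smul, hu]; simp

lemma proj_comEig (hn : n1 * n1 = 1) (F : WeylFrame B g C φ n1 y e)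
    (hs : ∀ x ∈ C, ∀ u v, B (x u) v = - B u (x v)) {v : V} {lam : (V →ₗ[k] V) → k}
    (hv : ∀ x ∈ C, x v = lam x • v) :
    ∀ x ∈ C, x (v - opD B e (fun p => (p.1, n1 * p.2)) 1 id v)
      = lam x • (v - opD B e (fun p => (p.1, n1 * p.2)) 1 id v) := by
  intro x hx
  have key : x ∘ₗ (opD B e (fun p => (p.1, n1 * p.2)) 1 id)
      = (opD B e (fun p => (p.1, n1 * p.2)) 1 id) ∘ₗ x := by
    refine frame_ext (nu_inv hn) F.pair ?_ ?_
    · intro u hu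
      rw [LinearMap.comp_apply, LinearMap.comp_apply, opD_u _ _ u hu, map_zero, opD_u]
      exact x_stab F hx (hs x hx) u hu
    · rintro ⟨i, ω⟩
      obtain ⟨l, hl⟩ := F.eig i
      simp [LinearMap.comp_apply, opD_e (nu_inv hn) F.pair, hl x hx]
  have k2 := LinearMap.congr_fun key v
  simp only [LinearMap.comp_apply] at k2
  rw [map_sub, k2, hv x hx, map_smul, smul_sub]

/-- Extension step, part 1: find `e, f`. -/
lemma step1 (hn : n1 * n1 = 1) (F : WeylFrame B g C φ n1 y e)
    (hsymm : ∀ u v, B u v = B v u) (hnd : ∀ u, (∀ v, B u v = 0) → u = 0)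
    (hs : ∀ x ∈ C, ∀ u v, B (x u) v = - B u (x v))
    (hspan : Submodule.span k (comEig C) = ⊤)
    (u : V) (hu : ∀ p, B u (e p) = 0) (x : V →ₗ[k] V) (hx : x ∈ C) (hxu : x u ≠ 0) :
    ∃ (v w : V) (lam : (V →ₗ[k] V) → k), (∀ p, B v (e p) = 0) ∧ (∀ p, B w (e p) = 0) ∧
      (∀ x ∈ C, x v = lam x • v) ∧ (∀ x ∈ C, x w = (- lam x) • w) ∧ B v w = 1 ∧ lam x ≠ 0 := by
  have h1 : ∃ v ∈ comEig C, x (v - opD B e (fun p => (p.1, n1 * p.2)) 1 id v) ≠ 0 := by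
    by_contra! hcon
    have : ∀ v : V, v ∈ Submodule.span k (comEig C) →
        x (v - opD B e (fun p => (p.1, n1 * p.2)) 1 id v) = 0 := by
      intro v hv
      induction hv using Submodule.span_induction with
      | mem v hv => exact hcon v hv
      | zero => simp
      | add a b _ _ ha hb =>
        rw [map_add, add_sub_add_comm, map_add, ha, hb, add_zero]
      | smul a b _ hb => rw [map_smul, ← smul_sub, map_smul, hb, smul_zero]
    have := this u (by rw [hspan]; trivial)
    rw [opD_u _ _ u hu, sub_zero] at this
    exact hxu this
  obtain ⟨v0, ⟨lam, hlam⟩, hv0⟩ := h1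
  have hv := proj_comEig hn F hs hlam
  have hvU := opD_compl (nu_inv hn) F.pair v0
  set v := v0 - opD B e (fun p => (p.1, n1 * p.2)) 1 id v0
  have hvne : v ≠ 0 := by intro h; rw [h] at hv0; simp at hv0
  have h2 : ∃ w ∈ comEig C, B v w ≠ 0 := by
    by_contra! hcon
    apply hvne
    apply hnd
    intro w
    have hw : w ∈ Submodule.span k (comEig C) := by rw [hspan]; trivial
    induction hw using Submodule.span_induction with
    | mem v hv => exact hcon v hv
    | zero => simp
    | add a b _ _ ha hb => rw [map_add, ha, hb, add_zero]
    | smul a b _ hb => rw [map_smul, hb, smul_zero]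
  obtain ⟨w0, ⟨lam', hlam'⟩, hw0⟩ := h2
  have hw := proj_comEig hn F hs hlam'
  have hwU := opD_compl (nu_inv hn) F.pair w0
  have hvw : B v (w0 - opD B e (fun p => (p.1, n1 * p.2)) 1 id w0) ≠ 0 := by
    rw [map_sub, opD_apply, map_sum]
    simpa [hvU] using hw0
  set w := w0 - opD B e (fun p => (p.1, n1 * p.2)) 1 id w0
  refine ⟨v, (B v w)⁻¹ • w, lam, hvU, ?_, hv, ?_, ?_, ?_⟩
  · intro p; simp [hwU]
  · intro x hx
    have := hs x hx v w
    rw [hv x hx, hw x hx] at this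
    simp only [map_smul, LinearMap.smul_apply, smul_eq_mul, ← neg_mul] at this
    have := mul_right_cancel₀ hvw this
    rw [map_smul, hw x hx, smul_comm, this, neg_neg]
  · simp [hvw]
  · intro h
    rw [hv x hx, h] at hv0; simp at hv0

/-- weights of `g ^ j v` -/
lemma gpow_weight {ζ : k} (hζ : ζ * φ y = 1) (hgx : ∀ x ∈ C, ∀ v, g (x v) = ζ • x (g v))
    {v : V} {lam : (V →ₗ[k] V) → k} (hv : ∀ x ∈ C, x v = lam x • v) (j : ℕ) :
    ∀ x ∈ C, x ((g ^ j) v) = (φ (y ^ j) * lam x) • (g ^ j) v := by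
  intro x hx
  induction j with
  | zero => simp [hv x hx]
  | succ j ih =>
    have h := hgx x hx ((g ^ j) v)
    rw [ih] at h
    have h2 := congrArg (fun v => φ y • v) h
    simp only [smul_smul, mul_comm (φ y) ζ, hζ, one_smul] at h2
    rw [pow_succ' g, Module.End.mul_apply, ← h2, map_smul, smul_smul, pow_succ' y, map_mul, mul_assoc]

lemma gpow_isom (hg : ∀ u v, B (g u) (g v) = B u v) (j : ℕ) (u v : V) :
    B ((g ^ j) u) ((g ^ j) v) = B u v := by
  induction j with
  | zero => simp
  | succ j ih => rw [pow_succ', Module.End.mul_apply, Module.End.mul_apply, hg, ih]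

/-- Extension step, part 2: make `f = g^t e` when `n1` is a power `y^t`. -/
lemma step2 [IsAlgClosed k] (h2 : (2 : k) ≠ 0) {ζ : k} (hζ : ζ * φ y = 1)
    (hgx : ∀ x ∈ C, ∀ v, g (x v) = ζ • x (g v))
    (hsymm : ∀ u v, B u v = B v u)
    (hg : ∀ u v, B (g u) (g v) = B u v) (hn : n1 * n1 = 1) (hφn : φ n1 = -1)
    (hyg : ∀ j l : ℕ, y ^ j = y ^ l → g ^ j = g ^ l) (F : WeylFrame B g C φ n1 y e)
    {v w : V} {lam : (V →ₗ[k] V) → k} (hv : ∀ p, B v (e p) = 0) (hw : ∀ p, B w (e p) = 0)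
    (hvl : ∀ x ∈ C, x v = lam x • v) (hwl : ∀ x ∈ C, x w = (- lam x) • w) (hvw : B v w = 1)
    (t : ℕ) (ht : n1 = y ^ t) :
    ∃ v : V, (∀ p, B v (e p) = 0) ∧ (∀ x ∈ C, x v = lam x • v) ∧ B v ((g ^ t) v) = 1 := by
  have hgU : ∀ j : ℕ, ∀ u, (∀ p, B u (e p) = 0) → ∀ p, B ((g ^ j) u) (e p) = 0 := by
    intro j
    induction j with
    | zero => intro u hu; simpa using hu
    | succ j ih =>
      intro u hu p
      rw [pow_succ', Module.End.mul_apply]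
      exact g_stab F hg _ (ih u hu) p
  have hgg : g ^ (t + t) = 1 := by
    have := hyg (t + t) 0 (by rw [pow_add, ← ht, hn, pow_zero])
    simpa using this
  have hgg' : ∀ v, (g ^ t) ((g ^ t) v) = v := by
    intro v
    rw [← Module.End.mul_apply, ← pow_add, hgg]; rfl
  have hQ : ∀ a b, B a ((g ^ t) b) = B b ((g ^ t) a) := by
    intro a b
    rw [← gpow_isom hg t a, hgg', hsymm]
  set w' := (g ^ t) w with hw'
  have hw'U := hgU t w hw
  have hw'l : ∀ x ∈ C, x w' = lam x • w' := by
    intro x hx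
    have := gpow_weight (lam := fun x => - lam x) hζ hgx hwl t x hx
    rw [this, ← ht, hφn]; simp [hw']
  have hvw' : B v ((g ^ t) w') = 1 := by rw [hw', hgg', hvw]
  have key : ∃ v : V, (∀ p, B v (e p) = 0) ∧ (∀ x ∈ C, x v = lam x • v) ∧ B v ((g ^ t) v) ≠ 0 := by
    by_cases h1 : B v ((g ^ t) v) = 0
    · by_cases h3 : B w' ((g ^ t) w') = 0
      · refine ⟨v + w', ?_, ?_, ?_⟩
        · intro p; rw [map_add, LinearMap.add_apply, hv, hw', hw'U p, add_zero]
        · intro x hx; rw [map_add, hvl x hx, hw'l x hx, smul_add]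
        · simp only [map_add, LinearMap.add_apply]
          rw [h1, h3, hvw', hQ w' v, hvw']
          norm_num [h2]
      · exact ⟨w', hw'U, hw'l, h3⟩
    · exact ⟨v, hv, hvl, h1⟩
  obtain ⟨v, hv, hvl, hq⟩ := key
  obtain ⟨s, hs⟩ := IsAlgClosed.exists_pow_nat_eq (B v ((g ^ t) v))⁻¹ (n := 2) (by norm_num)
  refine ⟨s • v, ?_, ?_, ?_⟩
  · intro p; simp [hv]
  · intro x hx; rw [map_smul, hvl x hx, smul_comm]
  · simp only [map_smul, LinearMap.smul_apply, smul_eq_mul]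
    rw [← mul_assoc, ← sq, hs, inv_mul_cancel₀ hq]

/-- Extension step, part 3: the new block. -/
lemma step3 {ζ : k} (hζ : ζ * φ y = 1)
    (hgx : ∀ x ∈ C, ∀ v, g (x v) = ζ • x (g v))
    (hsymm : ∀ u v, B u v = B v u) (hφ : Function.Injective φ)
    (hs : ∀ x ∈ C, ∀ u v, B (x u) v = - B u (x v))
    (hg : ∀ u v, B (g u) (g v) = B u v) (hn : n1 * n1 = 1) (hφn : φ n1 = -1)
    (hyg : ∀ j l : ℕ, y ^ j = y ^ l → g ^ j = g ^ l)
    (htot : ∀ ω : μ, ∃ j : ℕ, ω = y ^ j ∨ ω = n1 * y ^ j) (F : WeylFrame B g C φ n1 y e)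
    {v w : V} {lam : (V →ₗ[k] V) → k} (hv : ∀ p, B v (e p) = 0) (hw : ∀ p, B w (e p) = 0)
    (hvl : ∀ x ∈ C, x v = lam x • v) (hwl : ∀ x ∈ C, x w = (- lam x) • w) (hvw : B v w = 1)
    (x0 : V →ₗ[k] V) (hx0 : x0 ∈ C) (hlx0 : lam x0 ≠ 0)
    (hcase : ∀ t : ℕ, n1 = y ^ t → w = (g ^ t) v) :
    ∃ e' : μ → V, (∀ ω p, B (e' ω) (e p) = 0) ∧ (∀ ω, g (e' ω) = e' (y * ω)) ∧
      (∀ x ∈ C, ∀ ω, x (e' ω) = (φ ω * lam x) • e' ω) ∧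
      (∀ ω ω', B (e' ω) (e' ω') = if ω' = n1 * ω then 1 else 0) := by
  have hgU : ∀ j : ℕ, ∀ u, (∀ p, B u (e p) = 0) → ∀ p, B ((g ^ j) u) (e p) = 0 := by
    intro j
    induction j with
    | zero => intro u hu; simpa using hu
    | succ j ih =>
      intro u hu p
      rw [pow_succ', Module.End.mul_apply]
      exact g_stab F hg _ (ih u hu) p
  let R : μ → V → Prop := fun ω u => ∃ j : ℕ, (ω = y ^ j ∧ u = (g ^ j) v) ∨
    (ω = n1 * y ^ j ∧ u = (g ^ j) w)
  have hn' : ∀ a, n1 * (n1 * a) = a := by intro a; rw [← mul_assoc, hn, one_mul]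
  have hmix : ∀ j l : ℕ, y ^ j = n1 * y ^ l → (g ^ j) v = (g ^ l) w := by
    intro j l h
    -- `n1` is a power of `y`
    have hfin := isOfFinOrder_of_finite y
    obtain ⟨t, ht⟩ : ∃ t : ℕ, n1 = y ^ t := by
      have : n1 ∈ Subgroup.zpowers y := by
        rw [show n1 = y ^ j * (y ^ l)⁻¹ by rw [h]; simp]
        exact mul_mem (pow_mem (Subgroup.mem_zpowers y) _)
          (inv_mem (pow_mem (Subgroup.mem_zpowers y) _))
      rw [← mem_powers_iff_mem_zpowers] at this
      obtain ⟨t, ht⟩ := this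
      exact ⟨t, ht.symm⟩
    rw [hcase t ht, ← Module.End.mul_apply, ← pow_add]
    rw [hyg j (l + t)]
    rw [h, ht, ← pow_add, add_comm]
  have hfun : ∀ ω u u', R ω u → R ω u' → u = u' := by
    rintro ω u u' ⟨j, ⟨h1, rfl⟩ | ⟨h1, rfl⟩⟩ ⟨l, ⟨h2, rfl⟩ | ⟨h2, rfl⟩⟩
    · rw [hyg j l (h1.symm.trans h2)]
    · exact hmix j l (h1.symm.trans h2)
    · exact (hmix l j (h2.symm.trans h1)).symm
    · rw [hyg j l (mul_left_cancel (h1.symm.trans h2))]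
  have hex : ∀ ω, ∃ u, R ω u := by
    intro ω
    obtain ⟨j, h | h⟩ := htot ω
    · exact ⟨_, j, Or.inl ⟨h, rfl⟩⟩
    · exact ⟨_, j, Or.inr ⟨h, rfl⟩⟩
  choose e' he' using hex
  have hwt : ∀ x ∈ C, ∀ ω, x (e' ω) = (φ ω * lam x) • e' ω := by
    intro x hx ω
    obtain ⟨j, ⟨h1, h2⟩ | ⟨h1, h2⟩⟩ := he' ω
    · rw [h2, gpow_weight hζ hgx hvl j x hx, ← h1]
    · rw [h2, gpow_weight (lam := fun x => - lam x) hζ hgx hwl j x hx, h1, map_mul, hφn]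
      congr 1; ring
  refine ⟨e', ?_, ?_, hwt, ?_⟩
  · intro ω p
    obtain ⟨j, ⟨h1, h2⟩ | ⟨h1, h2⟩⟩ := he' ω
    · rw [h2]; exact hgU j v hv p
    · rw [h2]; exact hgU j w hw p
  · intro ω
    refine hfun (y * ω) _ _ ?_ (he' _)
    obtain ⟨j, ⟨h1, h2⟩ | ⟨h1, h2⟩⟩ := he' ω
    · exact ⟨j + 1, Or.inl ⟨by rw [h1, pow_succ'], by rw [h2, pow_succ', Module.End.mul_apply]⟩⟩
    · refine ⟨j + 1, Or.inr ⟨by rw [h1, pow_succ', mul_left_comm], ?_⟩⟩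
      rw [h2, pow_succ', Module.End.mul_apply]
  · intro ω ω'
    split_ifs with h
    · subst h
      obtain ⟨j, ⟨h1, h2⟩ | ⟨h1, h2⟩⟩ := he' ω
      · have : e' (n1 * ω) = (g ^ j) w :=
          hfun _ _ _ (he' _) ⟨j, Or.inr ⟨by rw [h1], rfl⟩⟩
        rw [this, h2, gpow_isom hg, hvw]
      · have : e' (n1 * ω) = (g ^ j) v :=
          hfun _ _ _ (he' _) ⟨j, Or.inl ⟨by rw [h1, hn'], rfl⟩⟩
        rw [this, h2, gpow_isom hg, hsymm, hvw]
    · by_contra hne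
      have h1 := hs x0 hx0 (e' ω) (e' ω')
      rw [hwt x0 hx0, hwt x0 hx0] at h1
      simp only [map_smul, LinearMap.smul_apply, smul_eq_mul, ← neg_mul] at h1
      have h2 := mul_right_cancel₀ hlx0 (mul_right_cancel₀ hne h1)
      apply h
      apply hφ
      rw [map_mul, hφn, h2]; ring

end
end Abstract

section Abstract2
open Module
variable {k V : Type*} [Field k] [AddCommGroup V] [Module k V]
variable {μ : Type*} [CommGroup μ] [Fintype μ] [DecidableEq μ]
    {B : LinearMap.BilinForm k V} {g : V →ₗ[k] V} {C : Set (V →ₗ[k] V)} {φ : μ →* k} {n1 y : μ}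

lemma max_frame [FiniteDimensional k V] [IsAlgClosed k] (h2 : (2 : k) ≠ 0) {ζ : k} (hζ : ζ * φ y = 1)
    (hgx : ∀ x ∈ C, ∀ v, g (x v) = ζ • x (g v))
    (hsymm : ∀ u v, B u v = B v u) (hφ : Function.Injective φ)
    (hnd : ∀ u, (∀ v, B u v = 0) → u = 0)
    (hs : ∀ x ∈ C, ∀ u v, B (x u) v = - B u (x v))
    (hg : ∀ u v, B (g u) (g v) = B u v) (hn : n1 * n1 = 1) (hφn : φ n1 = -1)
    (hyg : ∀ j l : ℕ, y ^ j = y ^ l → g ^ j = g ^ l)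
    (htot : ∀ ω : μ, ∃ j : ℕ, ω = y ^ j ∨ ω = n1 * y ^ j)
    (hspan : Submodule.span k (comEig C) = ⊤) :
    ∃ (s : ℕ) (e : Fin s × μ → V), WeylFrame B g C φ n1 y e ∧
      ∀ u, (∀ p, B u (e p) = 0) → ∀ x ∈ C, x u = 0 := by
  by_contra! hcon
  have hP : ∀ s : ℕ, ∃ e : Fin s × μ → V, WeylFrame B g C φ n1 y e := by
    intro s
    induction s with
    | zero =>
      exact ⟨fun p => p.1.elim0, ⟨fun p => p.1.elim0, fun i => i.elim0, fun i => i.elim0⟩⟩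
    | succ s ih =>
      obtain ⟨e, F⟩ := ih
      obtain ⟨u, hu, x, hx, hxu⟩ := hcon s e F
      obtain ⟨v, w, lam, hv, hw, hvl, hwl, hvw, hlx⟩ :=
        step1 hn F hsymm hnd hs hspan u hu x hx hxu
      have hnew : ∃ e' : μ → V, (∀ ω p, B (e' ω) (e p) = 0) ∧ (∀ ω, g (e' ω) = e' (y * ω)) ∧
          (∀ x ∈ C, ∀ ω, x (e' ω) = (φ ω * lam x) • e' ω) ∧
          (∀ ω ω', B (e' ω) (e' ω') = if ω' = n1 * ω then 1 else 0) := by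
        by_cases ht : ∃ t : ℕ, n1 = y ^ t
        · obtain ⟨t, ht⟩ := ht
          obtain ⟨v, hv, hvl, hq⟩ := step2 h2 hζ hgx hsymm hg hn hφn hyg F hv hw hvl hwl hvw t ht
          refine step3 hζ hgx hsymm hφ hs hg hn hφn hyg htot F (w := (g ^ t) v) hv ?_ hvl ?_ hq
            x hx hlx ?_
          · clear hq ht
            induction t with
            | zero => simpa using hv
            | succ t ih =>
              intro p
              rw [pow_succ', Module.End.mul_apply]
              exact g_stab F hg _ ih p
          · intro x hx
            rw [gpow_weight hζ hgx hvl t x hx, ← ht, hφn]; simp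
          · intro t' ht'
            rw [hyg t t' (ht.symm.trans ht')]
        · push Not at ht
          exact step3 hζ hgx hsymm hφ hs hg hn hφn hyg htot F hv hw hvl hwl hvw x hx hlx
            (fun t h => absurd h (ht t))
      obtain ⟨e', h1, h3, h4, h5⟩ := hnew
      refine ⟨fun p => Fin.lastCases (motive := fun _ => V) (e' p.2) (fun i => e (i, p.2)) p.1,
        ?_, ?_, ?_⟩
      · rintro ⟨i, ω⟩ ⟨j, ω'⟩
        have hpair := F.pair
        cases i using Fin.lastCases with
        | last =>
          cases j using Fin.lastCases with
          | last => simp [h5]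
          | cast j =>
            simp [h1, Fin.castSucc_ne_last]
        | cast i =>
          cases j using Fin.lastCases with
          | last => simp [hsymm _ (e' _), h1, (Fin.castSucc_ne_last _).symm]
          | cast j => simp [hpair _ _]
      · intro i ω
        cases i using Fin.lastCases with
        | last => simp [h3]
        | cast i => simp [F.ge]
      · intro i
        cases i using Fin.lastCases with
        | last => exact ⟨lam, by simpa using h4⟩
        | cast i => simpa using F.eig i
  obtain ⟨e, F⟩ := hP (finrank k V + 1)
  have := (frame_li (nu_inv hn) F.pair).fintype_card_le_finrank
  have hμ : 0 < Fintype.card μ := Fintype.card_pos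
  rw [Fintype.card_prod, Fintype.card_fin] at this
  nlinarith
end Abstract2

section Mat
variable {k : Type*} [Field k] {N : Type*} [Fintype N] [DecidableEq N]

lemma ss_of_span (x : Matrix N N k)
    (h : Submodule.span k {v : N → k | ∃ a : k, x *ᵥ v = a • v} = ⊤) : IsSemisimpleMat x := by
  let bs := Module.Basis.ofSpan h.ge
  have hsub := Module.Basis.ofSpan_subset h.ge
  have hfin : Finite _ := Module.Finite.finite_basis bs
  let eq := bs.indexEquiv (Pi.basisFun k N)
  let b := bs.reindex eq
  have hb : ∀ i, ∃ a : k, x *ᵥ (b i) = a • b i := by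
    intro i
    apply hsub
    simp [b, bs]
  choose a ha using hb
  let Q := (Pi.basisFun k N).toMatrix b
  have hQ : IsUnit Q.det := by
    have := (Pi.basisFun k N).invertibleToMatrix b
    exact (Matrix.isUnit_iff_isUnit_det _).1 (isUnit_of_invertible _)
  have hxQ : x * Q = Q * diagonal a := by
    ext i j
    have := congrFun (ha j) i
    rw [Matrix.mul_diagonal]
    simpa [Q, Matrix.mul_apply, Matrix.mulVec, dotProduct, Module.Basis.toMatrix_apply, mul_comm] using this
  refine ⟨Q⁻¹, ?_, ?_⟩
  · rw [Matrix.det_nonsing_inv]; exact hQ.ringInverse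
  · rw [Matrix.nonsing_inv_nonsing_inv _ hQ, mul_assoc, hxQ, ← mul_assoc, Matrix.nonsing_inv_mul _ hQ, one_mul]
    exact Matrix.isDiag_diagonal _

lemma ss_data (x : Matrix N N k) (hx : IsSemisimpleMat x) :
    (⨆ a, Module.End.maxGenEigenspace (Matrix.toLin' x) a = ⊤) ∧
    ∀ a, Module.End.maxGenEigenspace (Matrix.toLin' x) a ≤ Module.End.eigenspace (Matrix.toLin' x) a := by
  obtain ⟨P, hP, hd⟩ := hx
  have hPx : P * x = diagonal (P * x * P⁻¹).diag * P := by
    rw [(Matrix.isDiag_iff_diagonal_diag _).1 hd, mul_assoc, Matrix.nonsing_inv_mul _ hP, mul_one]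
  set D := (P * x * P⁻¹).diag
  have hxP : x * P⁻¹ = P⁻¹ * diagonal D := by
    have := congrArg (fun z => P⁻¹ * z * P⁻¹) hPx
    simpa [← mul_assoc, Matrix.nonsing_inv_mul _ hP, Matrix.mul_nonsing_inv_cancel_right _ _ hP] using this
  constructor
  · rw [eq_top_iff]
    rintro v -
    have hv : v = ∑ i, (P *ᵥ v) i • (P⁻¹ *ᵥ Pi.single i 1) := by
      conv_lhs => rw [← Matrix.one_mulVec v, ← Matrix.nonsing_inv_mul _ hP, ← Matrix.mulVec_mulVec]
      conv_lhs => rw [pi_eq_sum_univ' (P *ᵥ v)]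
      rw [Matrix.mulVec_sum]
      refine Finset.sum_congr rfl fun i _ => ?_
      rw [Matrix.mulVec_smul]
    rw [hv]
    refine Submodule.sum_mem _ fun i _ => Submodule.smul_mem _ _ ?_
    refine Submodule.mem_iSup_of_mem (D i) ?_
    refine (Module.End.mem_maxGenEigenspace _ _ _).2 ⟨1, ?_⟩
    rw [pow_one, LinearMap.sub_apply, Matrix.toLin'_apply, Matrix.mulVec_mulVec, hxP,
      ← Matrix.mulVec_mulVec, Matrix.diagonal_mulVec_single, mul_one]
    rw [show (Pi.single i (D i) : N → k) = D i • Pi.single i 1 by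
      rw [← Pi.single_smul, smul_eq_mul, mul_one], Matrix.mulVec_smul]
    simp
  · intro a v hv
    obtain ⟨n, hn⟩ := (Module.End.mem_maxGenEigenspace _ _ _).1 hv
    have hstep : ∀ u i, (P *ᵥ ((Matrix.toLin' x - a • 1) u)) i = (D i - a) * (P *ᵥ u) i := by
      intro u i
      rw [LinearMap.sub_apply, Matrix.toLin'_apply, Matrix.mulVec_sub, Matrix.mulVec_mulVec, hPx,
        ← Matrix.mulVec_mulVec, Pi.sub_apply, Matrix.mulVec_diagonal]
      simp [Matrix.mulVec_smul, sub_mul]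
    have hpow : ∀ n u i, (P *ᵥ (((Matrix.toLin' x - a • 1) ^ n) u)) i = (D i - a) ^ n * (P *ᵥ u) i := by
      intro n
      induction n with
      | zero => simp
      | succ n ih =>
        intro u i
        rw [pow_succ', Module.End.mul_apply, hstep, ih, pow_succ', mul_assoc]
    have h0 : P *ᵥ ((Matrix.toLin' x - a • 1) v) = 0 := by
      ext i
      have := hpow n v i
      rw [hn, Matrix.mulVec_zero, Pi.zero_apply] at this
      rw [hstep]
      rcases mul_eq_zero.1 this.symm with h | h
      · rw [eq_zero_of_pow_eq_zero h]; simp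
      · rw [h]; simp
    have h1 : (Matrix.toLin' x - a • 1) v = 0 := by
      have := congrArg (fun z => P⁻¹ *ᵥ z) h0
      simpa only [Matrix.mulVec_mulVec, Matrix.nonsing_inv_mul _ hP, Matrix.one_mulVec,
        Matrix.mulVec_zero] using this
    rw [Module.End.mem_eigenspace_iff]
    simpa [sub_eq_zero] using h1

lemma comEig_span (c : Submodule k (Matrix N N k)) (hcomm : ∀ x ∈ c, ∀ y ∈ c, x * y = y * x)
    (hss : ∀ x ∈ c, IsSemisimpleMat x) :
    Submodule.span k (comEig (Matrix.toLin' '' (c : Set (Matrix N N k)))) = ⊤ := by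
  have h := Module.End.iSup_iInf_maxGenEigenspace_eq_top_of_iSup_maxGenEigenspace_eq_top_of_commute
    (fun x : c => Matrix.toLin' x.1)
    (by
      intro x y _
      change _ ∘ₗ _ = _ ∘ₗ _
      rw [← Matrix.toLin'_mul, ← Matrix.toLin'_mul, hcomm x.1 x.2 y.1 y.2])
    (fun x => (ss_data x.1 (hss x.1 x.2)).1)
  rw [eq_top_iff, ← h]
  refine iSup_le fun χ => ?_
  intro v hv
  apply Submodule.subset_span
  classical
  refine ⟨fun f => if hf : LinearMap.toMatrix' f ∈ c then χ ⟨_, hf⟩ else 0, ?_⟩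
  rintro _ ⟨x, hx, rfl⟩
  have hx' : LinearMap.toMatrix' (Matrix.toLin' x) ∈ c := by simpa using hx
  beta_reduce
  rw [dif_pos hx']
  have := (ss_data x (hss x hx)).2 _ ((Submodule.mem_iInf _).1 hv ⟨x, hx⟩)
  rw [Module.End.mem_eigenspace_iff] at this
  rw [this]
  congr 2
  simp
end Mat

section Core
variable {k : Type*} [Field k]

lemma bil_mul_left {N : Type*} [Fintype N] [DecidableEq N] (J x : Matrix N N k) (u v : N → k) :
    Matrix.toBilin' J (Matrix.toLin' x u) v = Matrix.toBilin' (xᵀ * J) u v := by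
  rw [Matrix.toBilin'_apply', Matrix.toBilin'_apply', Matrix.toLin'_apply, ← Matrix.mulVec_mulVec,
    Matrix.dotProduct_mulVec u, Matrix.vecMul_transpose]

lemma bil_mul_right {N : Type*} [Fintype N] [DecidableEq N] (J x : Matrix N N k) (u v : N → k) :
    Matrix.toBilin' J u (Matrix.toLin' x v) = Matrix.toBilin' (J * x) u v := by
  rw [Matrix.toBilin'_apply', Matrix.toBilin'_apply', Matrix.toLin'_apply, ← Matrix.mulVec_mulVec]

lemma bil_ext {N : Type*} [Fintype N] [DecidableEq N] {A A' : Matrix N N k}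
    (h : ∀ u v, Matrix.toBilin' A u v = Matrix.toBilin' A' u v) : A = A' := by
  apply Matrix.toBilin'.injective
  exact LinearMap.ext fun u => LinearMap.ext fun v => h u v

set_option maxHeartbeats 1000000 in
lemma core [IsAlgClosed k] (h2 : (2 : k) ≠ 0)
    {μ : Type*} [CommGroup μ] [Fintype μ] [DecidableEq μ] (φ : μ →* k) (hφ : Function.Injective φ)
    (n1 y : μ) (hφn : φ n1 = -1) (ζ : k) (hζ : ζ * φ y = 1)
    (htot : ∀ ω : μ, ∃ j : ℕ, ω = y ^ j ∨ ω = n1 * y ^ j)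
    (M : ℕ) (hM : ∀ a : k, a ^ M = 1 ↔ ∃ ω, φ ω = a)
    (N : ℕ) (hN : Odd N) (J g : Matrix (Fin N) (Fin N) k) (hJt : Jᵀ = J) (hJ : IsUnit J.det)
    (hgO : g.transpose * J * g = J) (hgdet : IsUnit g.det)
    (hyg : ∀ j l : ℕ, y ^ j = y ^ l → g ^ j = g ^ l)
    (c : Submodule k (Matrix (Fin N) (Fin N) k))
    (hc : IsCartanSubspace {x | x.transpose * J + J * x = 0 ∧ g * x * g⁻¹ = ζ • x} c)
    (r : ℕ) (hr : Module.finrank k c = r) :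
    ∃ b : Fin r → Matrix (Fin N) (Fin N) k,
      LinearIndependent k b ∧ Submodule.span k (Set.range b) = c ∧
        littleWeylSet
          {h | h.transpose * J * h = J ∧ h.det = 1 ∧ h * g = g * h} c b = GmqrSet k M 1 r := by
  obtain ⟨hc1, hcomm, hss, hmax⟩ := hc
  have hn : n1 * n1 = 1 := by apply hφ; rw [map_mul, hφn]; simp
  set B := Matrix.toBilin' J with hB
  set G := Matrix.toLin' g with hG
  have hsymm : ∀ u v, B u v = B v u := by
    intro u v
    rw [hB, Matrix.toBilin'_apply', Matrix.toBilin'_apply', Matrix.dotProduct_mulVec,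
      ← Matrix.mulVec_transpose, hJt, dotProduct_comm]
  have hnd : ∀ u, (∀ v, B u v = 0) → u = 0 := by
    intro u hu
    have h1 : J *ᵥ u = 0 := by
      ext i
      have := hu (Pi.single i 1)
      rw [hsymm, hB, Matrix.toBilin'_apply'] at this
      simpa using this
    have := congrArg (fun z => J⁻¹ *ᵥ z) h1
    simpa only [Matrix.mulVec_mulVec, Matrix.nonsing_inv_mul _ hJ, Matrix.one_mulVec,
        Matrix.mulVec_zero] using this
  have hg : ∀ u v, B (G u) (G v) = B u v := by
    intro u v
    rw [hB, hG, bil_mul_left, bil_mul_right, hgO]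
  have hs : ∀ x ∈ Matrix.toLin' '' (c : Set (Matrix (Fin N) (Fin N) k)),
      ∀ u v, B (x u) v = - B u (x v) := by
    rintro _ ⟨x, hx, rfl⟩ u v
    have h1 := (hc1 hx).1
    rw [hB, bil_mul_left, bil_mul_right, eq_neg_of_add_eq_zero_left h1]; simp
  have hgx : ∀ x ∈ Matrix.toLin' '' (c : Set (Matrix (Fin N) (Fin N) k)),
      ∀ v, G (x v) = ζ • x (G v) := by
    rintro _ ⟨x, hx, rfl⟩ v
    have h1 := (hc1 hx).2
    have h3 : g * x = ζ • (x * g) := by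
      have := congrArg (fun z => z * g) h1
      simpa [Matrix.nonsing_inv_mul_cancel_right _ _ hgdet] using this
    simp only [hG, Matrix.toLin'_apply, Matrix.mulVec_mulVec, h3, Matrix.smul_mulVec]
  have hyg' : ∀ j l : ℕ, y ^ j = y ^ l → G ^ j = G ^ l := by
    intro j l h
    rw [hG, ← Matrix.toLin'_pow, ← Matrix.toLin'_pow, hyg j l h]
  obtain ⟨s, e, F, hkill⟩ := max_frame h2 hζ hgx hsymm hφ hnd hs hg hn hφn hyg' htot
    (comEig_span c hcomm hss)
  have hν : Function.Involutive (fun p : Fin s × μ => (p.1, n1 * p.2)) := nu_inv hn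
  have hp := F.pair
  have hgU : ∀ u, (∀ p, B u (e p) = 0) → ∀ p, B (G u) (e p) = 0 := fun u hu p => g_stab F hg u hu p
  have hge := F.ge
  have hli := frame_li hν hp
  set ν := (fun p : Fin s × μ => (p.1, n1 * p.2)) with hνdef
  have hene : ∀ p, e p ≠ 0 := fun p => hli.ne_zero p
  -- diagonal operators
  obtain ⟨DE, DEe, DEu, DEskew⟩ : ∃ DE : (Fin s → k) → ((Fin N → k) →ₗ[k] (Fin N → k)),
      (∀ a i ω, DE a (e (i, ω)) = (φ ω * a i) • e (i, ω)) ∧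
      (∀ a u, (∀ p, B u (e p) = 0) → DE a u = 0) ∧
      (∀ a u v, B (DE a u) v = - B u (DE a v)) := by
    refine ⟨fun a => opD B e ν (fun p => φ p.2 * a p.1) id, ?_, ?_, ?_⟩
    · intro a i ω; exact opD_e hν hp _ _ _
    · intro a u hu; exact opD_u _ _ u hu
    · intro a u v
      refine opD_skew hsymm hν hp _ ?_ u v
      intro p; simp [hνdef, hφn]
  obtain ⟨b, hbDE⟩ : ∃ b : Fin s → Matrix (Fin N) (Fin N) k,
      ∀ i, Matrix.toLin' (b i) = DE (Pi.single i 1) :=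
    ⟨fun i => LinearMap.toMatrix' (DE (Pi.single i 1)), fun i => Matrix.toLin'_toMatrix' _⟩
  have hsum : ∀ a : Fin s → k, Matrix.toLin' (∑ i, a i • b i) = DE a := by
    intro a
    refine frame_ext hν hp ?_ ?_
    · intro u hu
      rw [DEu a u hu]; simp [hbDE, DEu _ u hu]
    · rintro ⟨i, ω⟩
      rw [DEe]
      simp only [map_sum, map_smul, LinearMap.sum_apply, LinearMap.smul_apply, hbDE, DEe]
      rw [Finset.sum_eq_single i]
      · simp [smul_smul, mul_comm]
      · intro j _ hj; simp [Pi.single_apply, hj.symm]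
      · simp
  have hDEinj : ∀ a a', DE a = DE a' → a = a' := by
    intro a a' h
    ext i
    have := LinearMap.congr_fun h (e (i, 1))
    rw [DEe, DEe] at this
    simpa using smul_left_injective k (hene (i, 1)) this
  have hbli : LinearIndependent k b := by
    rw [Fintype.linearIndependent_iff]
    intro a ha i
    have h1 := hsum a
    rw [ha, map_zero] at h1
    have h0 := hsum 0
    simp only [Pi.zero_apply, zero_smul, Finset.sum_const_zero, map_zero] at h0
    exact congrFun (hDEinj _ _ (h1.symm.trans h0)) i
  have hmem : ∀ x, x ∈ Submodule.span k (Set.range b) → ∃ a, Matrix.toLin' x = DE a := by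
    intro x hx
    obtain ⟨a, rfl⟩ := (Submodule.mem_span_range_iff_exists_fun k).1 hx
    exact ⟨a, hsum a⟩
  have hspan : Submodule.span k (Set.range b) = c := by
    refine hmax _ ⟨?_, ?_, ?_⟩ ?_
    · intro x hx
      obtain ⟨a, ha⟩ := hmem x hx
      constructor
      · rw [add_eq_zero_iff_eq_neg]
        apply bil_ext
        intro u v
        rw [← bil_mul_left, ha, ← hB, DEskew, hB, map_neg, LinearMap.neg_apply,
          LinearMap.neg_apply, ← bil_mul_right, ha]
      · have : g * x = ζ • (x * g) := by
          apply Matrix.toLin'.injective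
          rw [map_smul, Matrix.toLin'_mul, Matrix.toLin'_mul, ha, ← hG]
          refine frame_ext hν hp ?_ ?_
          · intro u hu
            simp [DEu a u hu, DEu a _ (hgU u hu)]
          · rintro ⟨i, ω⟩
            simp only [LinearMap.comp_apply, LinearMap.smul_apply, DEe, hge, map_smul, smul_smul,
              map_mul]
            congr 1
            linear_combination (- φ ω * a i) * hζ
        rw [this, Matrix.smul_mul, Matrix.mul_nonsing_inv_cancel_right _ _ hgdet]
    · intro x hx x' hx'
      obtain ⟨a, ha⟩ := hmem x hx
      obtain ⟨a', ha'⟩ := hmem x' hx'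
      apply Matrix.toLin'.injective
      rw [Matrix.toLin'_mul, Matrix.toLin'_mul, ha, ha']
      refine frame_ext hν hp ?_ ?_
      · intro u hu
        simp [DEu _ u hu]
      · rintro ⟨i, ω⟩
        simp only [LinearMap.comp_apply, DEe, map_smul, smul_smul, mul_comm]
    · intro x hx
      obtain ⟨a, ha⟩ := hmem x hx
      apply ss_of_span
      rw [eq_top_iff]
      rintro v -
      refine frame_ind hν hp (P := fun v => v ∈ Submodule.span k _) ?_ ?_
        (fun _ _ => Submodule.add_mem _) (fun _ _ => Submodule.smul_mem _ _) v
      · intro u hu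
        apply Submodule.subset_span
        exact ⟨0, by rw [← Matrix.toLin'_apply, ha, DEu a u hu, zero_smul]⟩
      · rintro ⟨i, ω⟩
        apply Submodule.subset_span
        exact ⟨_, by rw [← Matrix.toLin'_apply, ha, DEe]⟩
    · intro x hx
      have hxC : Matrix.toLin' x ∈ Matrix.toLin' '' (c : Set (Matrix (Fin N) (Fin N) k)) :=
        ⟨x, hx, rfl⟩
      obtain ⟨a, ha⟩ : ∃ a : Fin s → k,
          ∀ i ω, Matrix.toLin' x (e (i, ω)) = (φ ω * a i) • e (i, ω) := by
        choose lam hlam using F.eig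
        exact ⟨fun i => lam i (Matrix.toLin' x), fun i ω => hlam i _ hxC ω⟩
      have : x = ∑ i, a i • b i := by
        apply Matrix.toLin'.injective
        rw [hsum]
        refine frame_ext hν hp ?_ ?_
        · intro u hu
          rw [hkill u hu _ hxC, DEu a u hu]
        · rintro ⟨i, ω⟩
          rw [ha, DEe]
      rw [this]
      exact Submodule.sum_mem _ fun i _ => Submodule.smul_mem _ _ (Submodule.subset_span ⟨i, rfl⟩)
  have hrs : r = s := by
    rw [← hr, ← hspan, finrank_span_eq_card hbli, Fintype.card_fin]
  subst hrs
  refine ⟨b, hbli, hspan, ?_⟩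
  have hbc : ∀ i, b i ∈ c := fun i => by rw [← hspan]; exact Submodule.subset_span ⟨i, rfl⟩
  ext w
  constructor
  · -- upper bound
    rintro ⟨h, ⟨hO, hdet, hcg⟩, hst1, hst2, hw⟩
    have hu : IsUnit h.det := by rw [hdet]; exact isUnit_one
    have hrow : ∀ i, ∃ i' ω', ∀ j, w i j = if j = i' then φ ω' else 0 := by
      intro i
      set v := Matrix.toLin' h⁻¹ (e (i, 1)) with hv
      have hvne : v ≠ 0 := by
        intro h0
        have := congrArg (Matrix.toLin' h) h0
        rw [hv, ← LinearMap.comp_apply, ← Matrix.toLin'_mul, Matrix.mul_nonsing_inv _ hu] at this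
        simp [hene] at this
      have hev : ∀ j, DE (Pi.single j 1) v = w i j • v := by
        intro j
        rw [← hbDE, hv, ← LinearMap.comp_apply, ← Matrix.toLin'_mul]
        obtain ⟨a, ha⟩ : ∃ a : Fin r → k, ∀ i, a i = w i j := ⟨fun i => w i j, fun _ => rfl⟩
        have h1 : b j * h⁻¹ = h⁻¹ * (∑ i, a i • b i) := by
          simp only [ha]
          rw [← hw j, mul_assoc h, Matrix.nonsing_inv_mul_cancel_left _ _ hu]
        rw [h1, Matrix.toLin'_mul, LinearMap.comp_apply, hsum, DEe, map_one, one_mul, ha, map_smul]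
      have hcoef : ∃ p, B v (e p) ≠ 0 := by
        by_contra! hcon
        -- all of `c` kills `v`
        have h0 : ∀ x ∈ c, Matrix.toLin' x v = 0 := by
          intro x hx
          exact hkill v hcon _ ⟨x, hx, rfl⟩
        have h1 := h0 _ (hst2 _ (hbc i))
        rw [hv, ← LinearMap.comp_apply, ← Matrix.toLin'_mul, mul_assoc,
          Matrix.mul_nonsing_inv _ hu, mul_one, Matrix.toLin'_mul, LinearMap.comp_apply, hbDE, DEe,
          map_smul, ← hv] at h1
        simp [hvne] at h1
      obtain ⟨⟨i', ω'⟩, hp'⟩ := hcoef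
      refine ⟨i', n1 * ω', fun j => ?_⟩
      have h1 := congrArg (fun z => B z (e (i', ω'))) (hev j)
      beta_reduce at h1
      rw [DEskew, DEe] at h1
      simp only [map_smul, LinearMap.smul_apply, smul_eq_mul, ← neg_mul] at h1
      rw [← mul_right_cancel₀ hp' h1]
      simp [Pi.single_apply, hφn, eq_comm]
    choose σ' ω' hσ using hrow
    have hsurj : Function.Surjective σ' := by
      intro j
      by_contra! hcon
      have : h * b j * h⁻¹ = 0 := by
        rw [hw j]
        apply Finset.sum_eq_zero
        intro i _
        rw [hσ, if_neg (hcon i).symm, zero_smul]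
      have h3 := congrArg (fun z => h⁻¹ * z * h) this
      simp only [mul_zero, zero_mul] at h3
      rw [mul_assoc h, Matrix.nonsing_inv_mul_cancel_left _ _ hu,
        Matrix.nonsing_inv_mul_cancel_right _ _ hu] at h3
      exact hbli.ne_zero j h3
    let σ := Equiv.ofBijective σ' (Finite.surjective_iff_bijective.1 hsurj)
    have hent : ∀ j, w (σ.symm j) j ^ M = 1 := by
      intro j
      rw [hM]
      refine ⟨ω' (σ.symm j), ?_⟩
      rw [hσ, if_pos]
      exact (σ.apply_symm_apply j).symm
    refine ⟨σ.symm, ?_, hent, ?_⟩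
    · intro i j hij
      rw [hσ, if_neg]
      rintro rfl
      exact hij (σ.symm_apply_apply i).symm
    · rw [Nat.div_one, ← Finset.prod_pow]
      exact Finset.prod_eq_one fun j _ => hent j
  · -- lower bound
    rintro ⟨σ, hz, hent, -⟩
    have : ∀ j, ∃ ω, φ ω = w (σ j) j := fun j => (hM _).1 (hent j)
    choose α hα using this
    let τ : Fin r × μ → Fin r × μ := fun p => (σ p.1, (α p.1)⁻¹ * p.2)
    have hτi : Function.Injective τ := by
      rintro ⟨i, ω⟩ ⟨j, ω'⟩ h
      simp only [τ, Prod.mk.injEq] at h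
      obtain ⟨h1, h3⟩ := h
      have := σ.injective h1
      subst this
      rw [mul_left_cancel h3]
    have hτν : ∀ p, τ (ν p) = ν (τ p) := by
      rintro ⟨i, ω⟩
      simp [τ, hνdef, mul_left_comm]
    let T := opT B e ν τ
    have Te : ∀ p, T (e p) = e (τ p) := fun p => opT_e hν hp τ p
    have Tu : ∀ u, (∀ p, B u (e p) = 0) → T u = u := fun u hu => opT_u τ u hu
    let t := LinearMap.toMatrix' T
    have htT : Matrix.toLin' t = T := Matrix.toLin'_toMatrix' _
    have htO : tᵀ * J * t = J := by
      apply bil_ext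
      intro u v
      rw [← bil_mul_right, ← bil_mul_left, htT, ← hB]
      exact opT_isom hsymm hν hp τ hτi hτν u v
    have htg : t * g = g * t := by
      apply Matrix.toLin'.injective
      rw [Matrix.toLin'_mul, Matrix.toLin'_mul, htT, ← hG]
      refine frame_ext hν hp ?_ ?_
      · intro u hu
        simp [Tu u hu, Tu _ (hgU u hu)]
      · rintro ⟨i, ω⟩
        simp [hge, Te, τ, mul_left_comm]
    have htb : ∀ j, t * b j = (w (σ j) j • b (σ j)) * t := by
      intro j
      apply Matrix.toLin'.injective
      rw [Matrix.toLin'_mul, Matrix.toLin'_mul, htT, map_smul, hbDE, hbDE]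
      refine frame_ext hν hp ?_ ?_
      · intro u hu
        simp [Tu u hu, DEu _ u hu]
      · rintro ⟨i, ω⟩
        simp only [LinearMap.comp_apply, LinearMap.smul_apply, Te, τ, DEe, map_smul, smul_smul]
        congr 1
        by_cases hij : i = j
        · subst hij
          simp only [Pi.single_eq_same, mul_one, ← hα, ← map_mul]
          rw [mul_inv_cancel_left]
        · have : σ i ≠ σ j := fun h => hij (σ.injective h)
          simp [Pi.single_apply, hij]
    have hdet2 : t.det = 1 ∨ t.det = -1 := by
      have := congrArg Matrix.det htO
      rw [Matrix.det_mul, Matrix.det_mul, Matrix.det_transpose] at this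
      apply mul_self_eq_one_iff.1
      apply mul_right_cancel₀ hJ.ne_zero
      rw [one_mul]; linear_combination this
    -- choose the sign
    obtain ⟨h, hO, hdet, hcg, hhb⟩ : ∃ h : Matrix (Fin N) (Fin N) k, hᵀ * J * h = J ∧ h.det = 1 ∧
        h * g = g * h ∧ ∀ j, h * b j = (w (σ j) j • b (σ j)) * h := by
      rcases hdet2 with hd | hd
      · exact ⟨t, htO, hd, htg, htb⟩
      · refine ⟨-t, by simpa using htO, ?_, by simpa using htg, fun j => ?_⟩
        · rw [Matrix.det_neg, hd, Fintype.card_fin, hN.neg_one_pow]; simp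
        · rw [neg_mul, mul_neg, htb j]
    have hu : IsUnit h.det := by rw [hdet]; exact isUnit_one
    have hconj : ∀ j, h * b j * h⁻¹ = w (σ j) j • b (σ j) := by
      intro j; rw [hhb j, Matrix.mul_nonsing_inv_cancel_right _ _ hu]
    have hconj' : ∀ j, h⁻¹ * b j * h = (w j (σ.symm j))⁻¹ • b (σ.symm j) := by
      intro j
      have h1 := hhb (σ.symm j)
      rw [Equiv.apply_symm_apply] at h1
      have hne : w j (σ.symm j) ≠ 0 := by
        have h4 := hα (σ.symm j)
        rw [Equiv.apply_symm_apply] at h4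
        rw [← h4]
        exact ((Group.isUnit _).map φ).ne_zero
      rw [Matrix.smul_mul] at h1
      have h3 := congrArg (fun z => (w j (σ.symm j))⁻¹ • (h⁻¹ * z)) h1
      simp only [Matrix.mul_smul, smul_smul, inv_mul_cancel₀ hne, one_smul] at h3
      rw [mul_assoc, ← h3, Matrix.nonsing_inv_mul_cancel_left _ _ hu]
    refine ⟨h, ⟨hO, hdet, hcg⟩, ?_, ?_, ?_⟩
    · intro x hx
      rw [← hspan] at hx
      induction hx using Submodule.span_induction with
      | mem x hx =>
        obtain ⟨i, rfl⟩ := hx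
        rw [hconj]; exact Submodule.smul_mem _ _ (hbc _)
      | zero => simp
      | add a b _ _ ha hb => rw [mul_add, add_mul]; exact add_mem ha hb
      | smul a b _ hb => rw [Matrix.mul_smul, Matrix.smul_mul]; exact Submodule.smul_mem _ _ hb
    · intro x hx
      rw [← hspan] at hx
      induction hx using Submodule.span_induction with
      | mem x hx =>
        obtain ⟨i, rfl⟩ := hx
        rw [hconj']; exact Submodule.smul_mem _ _ (hbc _)
      | zero => simp
      | add a b _ _ ha hb => rw [mul_add, add_mul]; exact add_mem ha hb
      | smul a b _ hb => rw [Matrix.mul_smul, Matrix.smul_mul]; exact Submodule.smul_mem _ _ hb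
    · intro j
      rw [hconj, Finset.sum_eq_single (σ j)]
      · intro i _ hi; rw [hz i j hi, zero_smul]
      · simp
end Core

section Final
variable {k : Type*} [Field k]

lemma antidiagJ_transpose (N : ℕ) : (antidiagJ k N)ᵀ = antidiagJ k N := by
  ext i j
  simp [antidiagJ, add_comm]

lemma antidiagJ_sq (N : ℕ) : antidiagJ k N * antidiagJ k N = 1 := by
  ext i j
  rw [Matrix.mul_apply, Finset.sum_eq_single (Fin.rev i)]
  · have h1 : (i : ℕ) + (Fin.rev i : ℕ) = N - 1 := by rw [Fin.val_rev]; omega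
    have h2 : ((Fin.rev i : ℕ) + (j : ℕ) = N - 1) ↔ i = j := by
      rw [Fin.val_rev, Fin.ext_iff]; omega
    simp only [antidiagJ, Matrix.of_apply, h1, h2, Matrix.one_apply, if_true, one_mul]
  · intro l _ hl
    have : ¬ ((i : ℕ) + (l : ℕ) = N - 1) := by
      intro h; apply hl; rw [Fin.ext_iff, Fin.val_rev]; omega
    simp [antidiagJ, this]
  · simp

lemma final_case [IsAlgClosed k] (h2 : (2 : k) ≠ 0)
    (m : ℕ) (hm : 0 < m) (ζ : k) (hζ : IsPrimitiveRoot ζ m)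
    (M : ℕ) (hM0 : 0 < M) (hMe : Even M) (hmM : m ∣ M)
    (hcase : ∀ a : k, a ^ M = 1 → a ^ m = 1 ∨ (-a) ^ m = 1)
    (n : ℕ) (g : Matrix (Fin (2 * n + 1)) (Fin (2 * n + 1)) k)
    (hgO : g.transpose * antidiagJ k (2 * n + 1) * g = antidiagJ k (2 * n + 1))
    (hgdet : g.det = 1)
    (hordm : g ^ m = 1)
    (c : Submodule k (Matrix (Fin (2 * n + 1)) (Fin (2 * n + 1)) k))
    (hc : IsCartanSubspace
      {x | x.transpose * antidiagJ k (2 * n + 1) + antidiagJ k (2 * n + 1) * x = 0 ∧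
        g * x * g⁻¹ = ζ • x} c)
    (r : ℕ) (hr : Module.finrank k c = r) :
    ∃ b : Fin r → Matrix (Fin (2 * n + 1)) (Fin (2 * n + 1)) k,
      LinearIndependent k b ∧ Submodule.span k (Set.range b) = c ∧
        littleWeylSet
          {h | h.transpose * antidiagJ k (2 * n + 1) * h = antidiagJ k (2 * n + 1) ∧
            h.det = 1 ∧ h * g = g * h} c b = GmqrSet k M 1 r := by
  classical
  have : NeZero M := ⟨hM0.ne'⟩
  letI : Fintype (rootsOfUnity M k) := Fintype.ofFinite _
  have hζ0 : ζ ≠ 0 := hζ.ne_zero hm.ne'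
  let φ : rootsOfUnity M k →* k := (Units.coeHom k).comp (rootsOfUnity M k).subtype
  have hφ : Function.Injective φ := by
    intro a b h
    exact Subtype.ext (Units.ext h)
  have hmk : ∀ a : k, a ^ M = 1 → ∃ ω, φ ω = a := by
    intro a ha
    exact ⟨rootsOfUnity.mkOfPowEq a ha, rfl⟩
  have hMiff : ∀ a : k, a ^ M = 1 ↔ ∃ ω, φ ω = a := by
    intro a
    refine ⟨hmk a, ?_⟩
    rintro ⟨ω, rfl⟩
    rw [← map_pow]
    have : ω ^ M = 1 := Subtype.ext ω.2
    rw [this, map_one]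
  obtain ⟨n1, hn1⟩ := hmk (-1) hMe.neg_one_pow
  obtain ⟨y, hy⟩ := hmk ζ⁻¹ (by
    obtain ⟨t, rfl⟩ := hmM
    rw [inv_pow, pow_mul, hζ.pow_eq_one, one_pow, inv_one])
  have : NeZero m := ⟨hm.ne'⟩
  refine core h2 φ hφ n1 y hn1 ζ (by rw [hy, mul_inv_cancel₀ hζ0]) ?_ M hMiff (2 * n + 1)
    ⟨n, rfl⟩ (antidiagJ k (2 * n + 1)) g (antidiagJ_transpose _) ?_ hgO
    (by rw [hgdet]; exact isUnit_one) ?_ c hc r hr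
  · intro ω
    rcases hcase (φ ω) ((hMiff _).2 ⟨ω, rfl⟩) with h | h
    · obtain ⟨j, -, hj⟩ := hζ.inv.eq_pow_of_pow_eq_one h
      refine ⟨j, Or.inl (hφ ?_)⟩
      rw [map_pow, hy, hj]
    · obtain ⟨j, -, hj⟩ := hζ.inv.eq_pow_of_pow_eq_one h
      refine ⟨j, Or.inr (hφ ?_)⟩
      rw [map_mul, map_pow, hy, hj, hn1]; ring
  · exact (Matrix.isUnit_iff_isUnit_det _).1 (IsUnit.of_mul_eq_one _ (antidiagJ_sq _))
  · intro j l h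
    rw [pow_eq_pow_iff_modEq, ← orderOf_injective φ hφ y, hy, ← hζ.inv.eq_orderOf] at h
    rw [pow_eq_pow_mod j hordm, pow_eq_pow_mod l hordm, h]
end Final
/-- little Weyl group of an inner automorphism of `SO(2n+1,k)`
of order exactly `m`: with respect to a suitable basis of a Cartan subspace
`c` (of dimension `r`) it equals `G(2m,1,r)` if `m` is odd and `G(m,1,r)` if
`m` is even. -/
theorem stmt12 {k : Type*} [Field k] [IsAlgClosed k]
    (hchar : ringChar k = 0 ∨ 2 < ringChar k)
    (m : ℕ) (hm : 0 < m) (hmchar : ¬ (ringChar k ∣ m))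
    (ζ : k) (hζ : IsPrimitiveRoot ζ m)
    (n : ℕ) (g : Matrix (Fin (2 * n + 1)) (Fin (2 * n + 1)) k)
    (hgO : g.transpose * antidiagJ k (2 * n + 1) * g = antidiagJ k (2 * n + 1))
    (hgdet : g.det = 1)
    (hordm : g ^ m = 1)
    (hordleast : ∀ j : ℕ, 0 < j → j < m → g ^ j ≠ 1)
    (c : Submodule k (Matrix (Fin (2 * n + 1)) (Fin (2 * n + 1)) k))
    (hc : IsCartanSubspace
      {x | x.transpose * antidiagJ k (2 * n + 1) + antidiagJ k (2 * n + 1) * x = 0 ∧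
        g * x * g⁻¹ = ζ • x} c)
    (r : ℕ) (hr : Module.finrank k c = r) :
    ∃ b : Fin r → Matrix (Fin (2 * n + 1)) (Fin (2 * n + 1)) k,
      LinearIndependent k b ∧ Submodule.span k (Set.range b) = c ∧
      (Odd m →
        littleWeylSet
          {h | h.transpose * antidiagJ k (2 * n + 1) * h = antidiagJ k (2 * n + 1) ∧
            h.det = 1 ∧ h * g = g * h} c b = GmqrSet k (2 * m) 1 r) ∧
      (Even m →
        littleWeylSet
          {h | h.transpose * antidiagJ k (2 * n + 1) * h = antidiagJ k (2 * n + 1) ∧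
            h.det = 1 ∧ h * g = g * h} c b = GmqrSet k m 1 r) := by
  have h2 : (2 : k) ≠ 0 := by
    apply Ring.two_ne_zero
    omega
  rcases Nat.even_or_odd m with he | ho
  · obtain ⟨b, h1, h3, h4⟩ := final_case h2 m hm ζ hζ m hm he dvd_rfl (fun a ha => Or.inl ha)
      n g hgO hgdet hordm c hc r hr
    exact ⟨b, h1, h3, fun ho => absurd he (Nat.not_even_iff_odd.2 ho), fun _ => h4⟩
  · obtain ⟨b, h1, h3, h4⟩ := final_case h2 m hm ζ hζ (2 * m) (by omega) (even_two_mul m)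
      (Dvd.intro_left 2 rfl) (fun a ha => by
        rw [mul_comm, pow_mul, sq, mul_self_eq_one_iff] at ha
        rcases ha with ha | ha
        · exact Or.inl ha
        · right; rw [ho.neg_pow, ha, neg_neg])
      n g hgO hgdet hordm c hc r hr
    exact ⟨b, h1, h3, fun _ => h4, fun he => absurd he (Nat.not_even_iff_odd.2 ho)⟩
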